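/- arXiv:2310.11548 — 3 statements merged into one kernel-verified Lean document; each statement's English description precedes it below -/
import Mathlib

section
/- Fix n, k : ℕ and a value type V. Model an incomplete dataset as D : Fin n → (Fin k → Option V), where a cell value of none denotes a missing value. Fix an attribute A : Fin k and an imputation-value function g : (Fin n → (Fin k → Option V)) → V, and define the imputation transformation T_A by (T_A D) i j = some (g D) if j = A and D i j = none, and (T_A D) i j = D i j otherwise. If D and D' differ in at most one row (there exists i₀ such that D i = D' i for all i ≠ i₀), then the number of rows i with (T_A D) i ≠ (T_A D') i is at most m_A + 1, where m_A is the number of rows i with D i A = none. -/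
/-- The imputation transformation for attribute `A`: every missing cell of attribute `A`
is filled with the single value `g D` computed from the whole dataset; all other cells
are unchanged. -/
def imputeAttr {n k : ℕ} {V : Type*} [DecidableEq V] (A : Fin k)
    (g : (Fin n → Fin k → Option V) → V) (D : Fin n → Fin k → Option V) :
    Fin n → Fin k → Option V :=
  fun i j => if j = A ∧ D i j = none then some (g D) else D i j

/-- Stability of a single-attribute imputation transformation: if `D` and `D'` differ
in at most one row, then the imputed datasets `T_A D` and `T_A D'` differ in at most
`m_A + 1` rows, where `m_A` is the number of rows of `D` missing attribute `A`. -/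
theorem imputeAttr_stability {n k : ℕ} {V : Type*} [DecidableEq V] (A : Fin k)
    (g : (Fin n → Fin k → Option V) → V) (D D' : Fin n → Fin k → Option V)
    (h : ∃ i₀ : Fin n, ∀ i, i ≠ i₀ → D i = D' i) :
    (Finset.univ.filter fun i => imputeAttr A g D i ≠ imputeAttr A g D' i).card ≤
      (Finset.univ.filter fun i => D i A = none).card + 1 := by
  classical
  obtain ⟨i₀, h⟩ := h
  -- A changed row is either `i₀`, or shared by `D` and `D'` and then changed only at a missing cell.
  refine le_trans (Finset.card_le_card (t := insert i₀ (Finset.univ.filter fun i => D i A = none))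
    ?_) (Finset.card_insert_le _ _)
  intro i hi
  simp only [Finset.mem_filter, Finset.mem_univ, true_and, Finset.mem_insert] at hi ⊢
  by_contra! hc
  obtain ⟨hne, hA⟩ := hc
  apply hi
  funext j
  have hnot : ¬(j = A ∧ D' i j = none) := by
    rw [← h i hne]
    rintro ⟨rfl, hj⟩
    exact hA hj
  simp only [imputeAttr, if_neg hnot, h i hne]
end

section
/- Let X be a type with a symmetric neighbor relation ∼, let R be a row type, m : ℕ, and let T : X → (Fin m → R) be a transformation that is c-stable: for all x ∼ x', the Hamming distance between T x and T x' (the number of coordinates where they differ) is at most c. Let M : (Fin m → R) → PMF O satisfy pure ε-DP with respect to substitution neighbors on Fin m → R (datasets differing in exactly one coordinate), i.e., δ = 0. Then the composite mechanism x ↦ M (T x) satisfies pure (c·ε)-DP with respect to ∼: for all x ∼ x' and all events Z : Set O, P[M (T x) ∈ Z] ≤ Real.exp (c·ε) · P[M (T x') ∈ Z]. -/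
/-!
Group privacy: datasets at Hamming distance `n` are joined by a chain of `n` single-coordinate
substitutions, and each link costs a factor `exp ε`. The chain is built by induction, each step
overwriting one differing coordinate (`exists_substitution_step`). Since `0 ≤ ε`, the resulting
factor `exp (n * ε)` is at most `exp (c * ε)` when `n ≤ c`.
-/

open scoped ENNReal

/-- The probability that the output of mechanism `μ` lands in the event `Z`. -/
noncomputable def prEvent {O : Type*} (μ : PMF O) (Z : Set O) : ℝ≥0∞ :=
  ∑' o, Z.indicator μ o

/-- Overwriting one differing coordinate of `D` by that of `D'` gives a substitution neighbor of `D`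
that is one step closer to `D'`. -/
lemma exists_substitution_step {R : Type*} [DecidableEq R] {m n : ℕ} (D D' : Fin m → R)
    (h : hammingDist D D' = n + 1) :
    ∃ E : Fin m → R, hammingDist D E = 1 ∧ hammingDist E D' = n := by
  have hne : D ≠ D' := by
    rw [← hammingDist_pos, h]
    exact n.succ_pos
  obtain ⟨i, hi⟩ := Function.ne_iff.mp hne
  refine ⟨Function.update D i (D' i), ?_, ?_⟩
  · have hs : (Finset.univ.filter fun j => D j ≠ Function.update D i (D' i) j) = {i} := by
      ext j
      by_cases hj : j = i
      · subst hj; simpa using hi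
      · simp [hj]
    rw [hammingDist, hs, Finset.card_singleton]
  · have hs : (Finset.univ.filter fun j => Function.update D i (D' i) j ≠ D' j) =
        (Finset.univ.filter fun j => D j ≠ D' j).erase i := by
      ext j
      by_cases hj : j = i
      · subst hj; simp
      · simp [hj]
    rw [hammingDist, hs, Finset.card_erase_of_mem (by simpa using hi)]
    have h' : (Finset.univ.filter fun j => D j ≠ D' j).card = n + 1 := h
    omega

/-- Group privacy for pure differential privacy. -/
lemma prEvent_le_of_hammingDist_eq {R O : Type*} [DecidableEq R] {m : ℕ}
    (M : (Fin m → R) → PMF O) (ε : ℝ)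
    (hDP : ∀ D D' : Fin m → R, hammingDist D D' = 1 → ∀ Z : Set O,
      prEvent (M D) Z ≤ ENNReal.ofReal (Real.exp ε) * prEvent (M D') Z)
    (n : ℕ) (D D' : Fin m → R) (h : hammingDist D D' = n) (Z : Set O) :
    prEvent (M D) Z ≤ ENNReal.ofReal (Real.exp ((n : ℝ) * ε)) * prEvent (M D') Z := by
  induction n generalizing D with
  | zero =>
    obtain rfl := hammingDist_eq_zero.mp h
    simp
  | succ n ih =>
    obtain ⟨E, h1, h2⟩ := exists_substitution_step D D' h
    calc prEvent (M D) Z ≤ ENNReal.ofReal (Real.exp ε) * prEvent (M E) Z := hDP D E h1 Z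
      _ ≤ ENNReal.ofReal (Real.exp ε) *
          (ENNReal.ofReal (Real.exp ((n : ℝ) * ε)) * prEvent (M D') Z) := by
        gcongr
        exact ih E h2
      _ = ENNReal.ofReal (Real.exp (((n + 1 : ℕ) : ℝ) * ε)) * prEvent (M D') Z := by
        rw [← mul_assoc, ← ENNReal.ofReal_mul (Real.exp_nonneg ε), ← Real.exp_add]
        congr 3
        push_cast
        ring

/-- Stability composition: if `T` is `c`-stable with respect to a symmetric neighbor
relation `∼` (neighboring inputs map to datasets at Hamming distance at most `c`) and
`M` is pure `ε`-DP with respect to substitution neighbors (datasets differing in exactly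
one coordinate), then `x ↦ M (T x)` is pure `(c·ε)`-DP with respect to `∼`. -/
theorem stability_composition {X R O : Type*} [DecidableEq R] {m : ℕ}
    (Nbr : X → X → Prop) (hsymm : Symmetric Nbr)
    (T : X → Fin m → R) (c : ℕ)
    (hstable : ∀ x x', Nbr x x' → hammingDist (T x) (T x') ≤ c)
    (M : (Fin m → R) → PMF O) (ε : ℝ) (hε : 0 ≤ ε)
    (hDP : ∀ D D' : Fin m → R, hammingDist D D' = 1 → ∀ Z : Set O,
      prEvent (M D) Z ≤ ENNReal.ofReal (Real.exp ε) * prEvent (M D') Z) :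
    ∀ x x', Nbr x x' → ∀ Z : Set O,
      prEvent (M (T x)) Z ≤
        ENNReal.ofReal (Real.exp ((c : ℝ) * ε)) * prEvent (M (T x')) Z := by
  intro x x' hx Z
  refine (prEvent_le_of_hammingDist_eq M ε hDP _ (T x) (T x') rfl Z).trans ?_
  gcongr
  exact hstable x x' hx
end

section
/- Let X be a type with a symmetric neighbor relation ∼ and let γ : PMF (X × X) be a coupling whose support consists only of pairs (x, x') with x ∼ x'. Let μ = γ.map Prod.fst and μ' = γ.map Prod.snd be its marginals. If M : X → PMF O satisfies (ε, δ)-DP with respect to ∼, then for all events Z : Set O, P[μ.bind M ∈ Z] ≤ Real.exp ε · P[μ'.bind M ∈ Z] + δ. -/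
/-!
The probability of an event under a mixture `p.bind f` is the `p`-average of its probabilities
under the components. Since both marginals are images of the coupling `γ`, both mixtures are
averages over the same pairs `q ~ γ`: of `M q.1` and of `M q.2` respectively. The privacy
inequality holds for every pair in the support of `γ`, and averaging it over `γ`, which has total
mass one, leaves the constants `exp ε` and `δ` unchanged.
-/

open scoped ENNReal

/-- Law of total probability for a mixture; in `ℝ≥0∞` the exchange of sums is unconditional. -/
theorem prEvent_bind {A O : Type*} (p : PMF A) (f : A → PMF O) (Z : Set O) :
    prEvent (p.bind f) Z = ∑' a, p a * prEvent (f a) Z := by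
  unfold prEvent
  simp_rw [← ENNReal.tsum_mul_left]
  rw [ENNReal.tsum_comm]
  refine tsum_congr fun o => ?_
  by_cases ho : o ∈ Z <;> simp [ho, PMF.bind_apply]

/-- Joint convexity / coupling lemma: if `γ` is a coupling supported on neighboring
pairs and `M` is `(ε, δ)`-DP with respect to the neighbor relation, then the
`(ε, δ)`-DP inequality holds between the two mixtures `μ.bind M` and `μ'.bind M`,
where `μ, μ'` are the marginals of `γ`. -/
theorem coupling_dp_transfer {X O : Type*} (Nbr : X → X → Prop) (hsymm : Symmetric Nbr)
    (γ : PMF (X × X)) (hsupp : ∀ q ∈ γ.support, Nbr q.1 q.2)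
    (M : X → PMF O) (ε δ : ℝ)
    (hDP : ∀ x x', Nbr x x' → ∀ Z : Set O,
      prEvent (M x) Z ≤ ENNReal.ofReal (Real.exp ε) * prEvent (M x') Z +
        ENNReal.ofReal δ) :
    ∀ Z : Set O,
      prEvent ((γ.map Prod.fst).bind M) Z ≤
        ENNReal.ofReal (Real.exp ε) * prEvent ((γ.map Prod.snd).bind M) Z +
          ENNReal.ofReal δ := by
  intro Z
  rw [PMF.bind_map, PMF.bind_map, prEvent_bind, prEvent_bind]
  simp only [Function.comp_apply]
  calc ∑' q, γ q * prEvent (M q.1) Z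
      ≤ ∑' q, (ENNReal.ofReal (Real.exp ε) * (γ q * prEvent (M q.2) Z) +
          γ q * ENNReal.ofReal δ) := by
        refine ENNReal.tsum_le_tsum fun q => ?_
        by_cases hq : γ q = 0
        · simp [hq]
        · calc γ q * prEvent (M q.1) Z
              ≤ γ q * (ENNReal.ofReal (Real.exp ε) * prEvent (M q.2) Z +
                  ENNReal.ofReal δ) := by
                gcongr
                exact hDP _ _ (hsupp q ((γ.mem_support_iff q).2 hq)) Z
            _ = _ := by ring
    _ = _ := by
        rw [ENNReal.tsum_add, ENNReal.tsum_mul_left, ENNReal.tsum_mul_right, γ.tsum_coe, one_mul]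
end
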